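/- arXiv:1203.5135 — 2 statements merged into one kernel-verified Lean document; each statement's English description precedes it below -/
import Mathlib

section
/- Let r ≥ 1, let (T, ξ_T, I_T) be an i'-overlapping tree for some i' ∈ {1,2,3,4}, let i ∈ {1,2,3,4} with i ≠ i', and let ω_T be the dyadic interval of length |I_T|^{-1} containing ξ_T, p_T = I_T × ω_T. Then for all real coefficients (c_P)_{P∈T} and every x ∈ [0,∞): ‖ ∑_{P ∈ T : |I_P| ≥ 2^k} c_P φ_{P_i}(x) ‖_{V^r_k} = ‖ A_k[ sgn(φ_{p_T}) ∑_{P ∈ T} c_P φ_{P_i} ](x) ‖_{V^r_k}. -/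
/-!
On `I_P`, with `P ∈ T`, the sign of `φ_{p_T}` is the Walsh function whose index consists of the bits
of `ω_T`. Its high bits are those of `ω_{P_{i'}}`, because `ω_T ⊆ ω_{P_{i'}}`, and its low bits only
contribute a factor that is constant on `I_P`. Walsh functions multiply by the exclusive or of their
indices, and `ω_{P_i}`, `ω_{P_{i'}}` share all bits but the lowest two, so up to that factor
`sgn(φ_{p_T}) φ_{P_i}` is the Walsh function of index `i ⊕ i' ≠ 0` on `I_P`. With `2^t` the leading
bit of `i ⊕ i'` and `s = t + 1`, it is constant on dyadic intervals of length `2^{-s} |I_P|` and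
takes opposite values on siblings. Thus `A_k` either reproduces it (`2^k ≤ 2^{-s} |I_P|`) or
annihilates it.

As `s` is the same for all `P ∈ T`, the average `A_k` of the signed tree sum is, up to a sign
independent of `k`, the tree sum truncated at `|I_P| ≥ 2^{k+s}`, and the variation does not see the
sign or the shift of `k`.
-/

open MeasureTheory Set
open scoped ENNReal

noncomputable section

/-- A dyadic interval `[n 2^k, (n+1) 2^k) ⊆ [0,∞)`. -/
structure DyadicInterval where
  n : ℕ
  k : ℤ
  deriving DecidableEq

namespace DyadicInterval

/-- The length `2^k` of a dyadic interval. -/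
def len (I : DyadicInterval) : ℝ := 2 ^ I.k

/-- The left endpoint `n 2^k` of a dyadic interval. -/
def lo (I : DyadicInterval) : ℝ := I.n * 2 ^ I.k

/-- A dyadic interval as a subset of `ℝ`. -/
def toSet (I : DyadicInterval) : Set ℝ := Set.Ico I.lo (I.lo + I.len)

end DyadicInterval

/-- The Walsh function of index `m` (Paley ordering): for `y ∈ [0,1)` with binary digits
`y_i`, `W_m(y) = (-1)^{∑ m_i y_i}`. -/
def walshF (m : ℕ) (y : ℝ) : ℝ :=
  ∏ i ∈ Finset.range m, if m.testBit i then (-1 : ℝ) ^ ⌊y * 2 ^ (i + 1)⌋ else 1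

/-- The Walsh wave packet of the rectangle `I × ω`.  For a tile (a rectangle of area one) this
is the unique family satisfying `φ_{I×[0,2^n)} = |I|^{-1/2} 1_I` together with the recursions
`φ_{I×ω_r} = (φ_{I_l×ω} − φ_{I_r×ω})/√2` and `φ_{I×ω_l} = (φ_{I_l×ω} + φ_{I_r×ω})/√2`. -/
def wavePacket (I ω : DyadicInterval) (x : ℝ) : ℝ :=
  I.toSet.indicator (fun x => I.len ^ (-(1 : ℝ) / 2) * walshF ω.n ((x - I.lo) / I.len)) x

/-- `⟨f, g⟩ = ∫_0^∞ f g`. -/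
def innerF (f g : ℝ → ℝ) : ℝ := ∫ x in Set.Ici (0 : ℝ), f x * g x

/-- A tile: a dyadic rectangle of area one. -/
structure Tile where
  I : DyadicInterval
  ω : DyadicInterval
  area : I.k + ω.k = 0

/-- The Walsh wave packet of a tile. -/
def Tile.wp (p : Tile) : ℝ → ℝ := wavePacket p.I p.ω

/-- A tile as a subset of `[0,∞) × [0,∞)`. -/
def Tile.toSet (p : Tile) : Set (ℝ × ℝ) := p.I.toSet ×ˢ p.ω.toSet

/-- A quartile: a dyadic rectangle of area four. -/
structure Quartile where
  I : DyadicInterval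
  ω : DyadicInterval
  area : I.k + ω.k = 2

namespace Quartile

/-- The frequency interval `ω_{P_{i+1}}` (the `i`-th dyadic grandchild of `ω_P`, `i : Fin 4`,
in increasing order). -/
def freq (P : Quartile) (i : Fin 4) : DyadicInterval := ⟨4 * P.ω.n + i.val, P.ω.k - 2⟩

/-- The tile `P_{i+1} = I_P × ω_{P_{i+1}}` as a subset of the plane, for `i : Fin 4`. -/
def subtileSet (P : Quartile) (i : Fin 4) : Set (ℝ × ℝ) := P.I.toSet ×ˢ (P.freq i).toSet

/-- The Walsh wave packet `φ_{P_{i+1}}` for `i : Fin 4`. -/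
def wp (P : Quartile) (i : Fin 4) : ℝ → ℝ := wavePacket P.I (P.freq i)

end Quartile

instance : DecidableEq Quartile := fun P Q =>
  decidable_of_iff (P.I = Q.I ∧ P.ω = Q.ω) (by cases P; cases Q; simp)

/-- `(T, ξ, I_T)` is a tree: `ξ ∈ [0,∞)` and every `P ∈ T` has `I_P ⊆ I_T` and `ξ ∈ ω_P`. -/
def IsTree (T : Finset Quartile) (ξ : ℝ) (It : DyadicInterval) : Prop :=
  0 ≤ ξ ∧ ∀ P ∈ T, P.I.toSet ⊆ It.toSet ∧ ξ ∈ P.ω.toSet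

/-- An `i`-overlapping tree (`i : Fin 4` indexes `P_1,…,P_4`): `ξ_T ∈ ω_{P_{i+1}}` for all `P`. -/
def IsOverlapping (i : Fin 4) (T : Finset Quartile) (ξ : ℝ) (It : DyadicInterval) : Prop :=
  IsTree T ξ It ∧ ∀ P ∈ T, ξ ∈ (P.freq i).toSet

/-- An `i`-lacunary tree: `j`-overlapping for some `j ≠ i`. -/
def IsLacunary (i : Fin 4) (T : Finset Quartile) (ξ : ℝ) (It : DyadicInterval) : Prop :=
  ∃ j, j ≠ i ∧ IsOverlapping j T ξ It

/-- `ω_T`: the dyadic interval of length `|I_T|⁻¹` containing `ξ`; `p_T = I_T × ω_T`. -/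
def topFreq (It : DyadicInterval) (ξ : ℝ) : DyadicInterval := ⟨(⌊ξ * 2 ^ It.k⌋).toNat, -It.k⟩

/-- The dyadic interval of length `2^k` containing `x ≥ 0`. -/
def dyadicPiece (k : ℤ) (x : ℝ) : Set ℝ :=
  Set.Ico ((⌊x / 2 ^ k⌋ : ℝ) * 2 ^ k) (((⌊x / 2 ^ k⌋ : ℝ) + 1) * 2 ^ k)

/-- The dyadic averaging operator `A_k[f](x) = |I|⁻¹ ∫_I f` with `I ∋ x` dyadic, `|I| = 2^k`. -/
def dyadicAvg (k : ℤ) (f : ℝ → ℝ) (x : ℝ) : ℝ :=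
  ((2 : ℝ) ^ k)⁻¹ * ∫ y in dyadicPiece k x, f y

/-- The `r`-variation seminorm of `g : ℤ → ℝ` over the index set `S ⊆ ℤ`:
the supremum of `(∑_{j=1}^N |g(k_j) − g(k_{j−1})|^r)^{1/r}` over finite increasing
sequences `k_0 < ⋯ < k_N` in `S`. -/
def varNorm (r : ℝ) (S : Set ℤ) (g : ℤ → ℝ) : ℝ≥0∞ :=
  ⨆ (N : ℕ) (k : ℕ → ℤ) (_ : StrictMono k) (_ : ∀ j ≤ N, k j ∈ S),
    (∑ j ∈ Finset.range N, ENNReal.ofReal (|g (k (j + 1)) - g (k j)| ^ r)) ^ (1 / r)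

/-- The dyadic `L^t` Hardy–Littlewood maximal operator `M^t[f](x) = sup_k (A_k[|f|^t](x))^{1/t}`. -/
def maxOp (t : ℝ) (f : ℝ → ℝ) (x : ℝ) : ℝ≥0∞ :=
  ⨆ k : ℤ, ((ENNReal.ofReal ((2 : ℝ) ^ k))⁻¹ *
    ∫⁻ y in dyadicPiece k x, ENNReal.ofReal (|f y| ^ t)) ^ (1 / t)

/-- Given a strictly increasing `kk : ℤ → ℤ` and coefficients `a : ℤ → ℝ`, the coefficient
`a_m` where `m` is the (unique) integer with `kk (m-1) ≤ K < kk m` (`K = log₂|I_P|`),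
and `0` if no such `m` exists. -/
def linCoeff (kk : ℤ → ℤ) (a : ℤ → ℝ) (K : ℤ) : ℝ :=
  letI := Classical.propDecidable (∃ m : ℤ, kk (m - 1) ≤ K ∧ K < kk m)
  if h : ∃ m : ℤ, kk (m - 1) ≤ K ∧ K < kk m then a h.choose else 0

/-- Linearization data for the `r`-variation: measurably in `x`, a strictly increasing
sequence of integers `k_j(x)` and coefficients `a_j(x)` with `∑_j |a_j(x)|^{r'} ≤ 1`,
`r' = r/(r-1)`. -/
structure LinData (r : ℝ) where
  kseq : ℝ → ℤ → ℤ
  aseq : ℝ → ℤ → ℝ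
  mono : ∀ x, StrictMono (kseq x)
  meas_k : ∀ j, Measurable fun x => kseq x j
  meas_a : ∀ j, Measurable fun x => aseq x j
  abound : ∀ x, ∀ s : Finset ℤ, ∑ j ∈ s, |aseq x j| ^ (r / (r - 1)) ≤ 1

/-- `a_P(x)` for a quartile `P`. -/
def LinData.coeff {r : ℝ} (L : LinData r) (P : Quartile) (x : ℝ) : ℝ :=
  linCoeff (L.kseq x) (L.aseq x) P.I.k

/-- The modified wave packets: `φ̃_{P_3}(x) = a_P(x) φ_{P_3}(x)` and `φ̃_{P_i} = φ_{P_i}`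
for `i ≠ 3` (here `i : Fin 4`, so index `2` plays the role of `3`). -/
def LinData.wp {r : ℝ} (L : LinData r) (P : Quartile) (i : Fin 4) (x : ℝ) : ℝ :=
  (if i = (2 : Fin 4) then L.coeff P x else 1) * P.wp i x

/-- `size_i(Ps, f)`: the sup of `(|I_T|⁻¹ ∑_{P ∈ T} |⟨f, φ̃_{P_i}⟩|²)^{1/2}` over
`i`-lacunary trees `T ⊆ Ps`. -/
def treeSize {r : ℝ} (L : LinData r) (i : Fin 4) (Ps : Set Quartile) (f : ℝ → ℝ) : ℝ≥0∞ :=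
  ⨆ (T : Finset Quartile) (ξ : ℝ) (It : DyadicInterval)
    (_ : IsLacunary i T ξ It) (_ : (T : Set Quartile) ⊆ Ps),
    ENNReal.ofReal ((It.len)⁻¹ * ∑ P ∈ T, innerF f (L.wp P i) ^ 2) ^ ((1 : ℝ) / 2)

/-- Lebesgue measure restricted to `[0,∞)`. -/
def mu0 : Measure ℝ := volume.restrict (Set.Ici 0)

end

/-! ### Dyadic positions -/

/-- The position `n` of the dyadic interval `[n 2^k, (n+1) 2^k)` of length `2^k` containing `x`.
A function is constant on all dyadic intervals of length `2^k` iff it factors through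
`dyadicIndex k`. -/
noncomputable def dyadicIndex (k : ℤ) (x : ℝ) : ℤ := ⌊x / 2 ^ k⌋

lemma floor_div_mul_two_pow (k : ℤ) (j : ℕ) (x : ℝ) :
    ⌊x / 2 ^ k * 2 ^ j⌋ = dyadicIndex (k - j) x := by
  rw [dyadicIndex, zpow_sub₀ two_ne_zero, zpow_natCast, div_div_eq_mul_div, div_mul_eq_mul_div]

lemma dyadicIndex_add_natCast (k : ℤ) (d : ℕ) (x : ℝ) :
    dyadicIndex (k + d) x = dyadicIndex k x / 2 ^ d := by
  have h := Int.floor_div_natCast (x / 2 ^ k) (2 ^ d)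
  rw [dyadicIndex, dyadicIndex, zpow_add₀ two_ne_zero, zpow_natCast, ← div_div]
  exact_mod_cast h

lemma dyadicIndex_add_one (k : ℤ) (x : ℝ) : dyadicIndex (k + 1) x = dyadicIndex k x / 2 := by
  simpa using dyadicIndex_add_natCast k 1 x

lemma dyadicIndex_intCast_mul (k n : ℤ) : dyadicIndex k (n * 2 ^ k) = n := by
  rw [dyadicIndex, mul_div_cancel_right₀ _ (by positivity), Int.floor_intCast]

lemma dyadicIndex_factorsThrough {k l : ℤ} (hkl : k ≤ l) :
    (dyadicIndex l).FactorsThrough (dyadicIndex k) := by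
  obtain ⟨d, rfl⟩ := Int.le.dest hkl
  intro x y hxy
  rw [dyadicIndex_add_natCast, dyadicIndex_add_natCast, hxy]

lemma mem_dyadicPiece {k : ℤ} {x y : ℝ} :
    y ∈ dyadicPiece k x ↔ dyadicIndex k y = dyadicIndex k x := by
  have h : (0 : ℝ) < 2 ^ k := by positivity
  rw [dyadicPiece, dyadicIndex, dyadicIndex, Int.floor_eq_iff (a := y / 2 ^ k), le_div_iff₀ h,
    div_lt_iff₀ h, Set.mem_Ico]

lemma DyadicInterval.mem_toSet {I : DyadicInterval} {x : ℝ} :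
    x ∈ I.toSet ↔ dyadicIndex I.k x = I.n := by
  have h : (0 : ℝ) < 2 ^ I.k := by positivity
  rw [toSet, lo, len, dyadicIndex, Int.floor_eq_iff, le_div_iff₀ h, div_lt_iff₀ h, Set.mem_Ico,
    add_mul, one_mul, Int.cast_natCast]

lemma DyadicInterval.k_le_of_toSet_subset {I J : DyadicInterval} (h : J.toSet ⊆ I.toSet) :
    J.k ≤ I.k := by
  have hJ : (0 : ℝ) < 2 ^ J.k := by positivity
  rw [toSet, toSet, len, len, Set.Ico_subset_Ico_iff (by linarith)] at h
  exact (zpow_le_zpow_iff_right₀ one_lt_two).1 (by linarith : (2 : ℝ) ^ J.k ≤ 2 ^ I.k)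

lemma topFreq_n_div_two_pow {I ω : DyadicInterval} {ξ : ℝ} {d : ℕ}
    (hξ : ξ ∈ ω.toSet) (hd : ω.k = -I.k + d) : (topFreq I ξ).n / 2 ^ d = ω.n := by
  have hξ0 : 0 ≤ ξ := le_trans (by unfold DyadicInterval.lo; positivity) hξ.1
  have hn : ((topFreq I ξ).n : ℤ) = dyadicIndex (-I.k) ξ := by
    rw [dyadicIndex, zpow_neg, div_inv_eq_mul]
    exact Int.toNat_of_nonneg (Int.floor_nonneg.2 (by positivity))
  rw [DyadicInterval.mem_toSet, hd, dyadicIndex_add_natCast, ← hn] at hξ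
  exact_mod_cast hξ

/-! ### Dyadic averages -/

lemma measurableSet_dyadicPiece (k : ℤ) (x : ℝ) : MeasurableSet (dyadicPiece k x) :=
  measurableSet_Ico

lemma volume_real_dyadicPiece (k : ℤ) (x : ℝ) : volume.real (dyadicPiece k x) = 2 ^ k := by
  have h : (0 : ℝ) < 2 ^ k := by positivity
  rw [dyadicPiece, Real.volume_real_Ico_of_le (by linarith)]
  ring

lemma dyadicPiece_add_one (k : ℤ) (x : ℝ) :
    dyadicPiece (k + 1) x =
      dyadicPiece k ((2 * dyadicIndex (k + 1) x : ℤ) * 2 ^ k) ∪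
        dyadicPiece k ((2 * dyadicIndex (k + 1) x + 1 : ℤ) * 2 ^ k) := by
  ext y
  rw [Set.mem_union, mem_dyadicPiece, mem_dyadicPiece, mem_dyadicPiece, dyadicIndex_intCast_mul,
    dyadicIndex_intCast_mul, dyadicIndex_add_one k y]
  omega

lemma disjoint_dyadicPiece {k : ℤ} {x y : ℝ} (h : dyadicIndex k x ≠ dyadicIndex k y) :
    Disjoint (dyadicPiece k x) (dyadicPiece k y) :=
  Set.disjoint_left.2 fun _ hx hy => h ((mem_dyadicPiece.1 hx).symm.trans (mem_dyadicPiece.1 hy))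

lemma dyadicAvg_add_one {k : ℤ} {f : ℝ → ℝ} (hf : ∀ x, IntegrableOn f (dyadicPiece k x))
    (x : ℝ) :
    dyadicAvg (k + 1) f x =
      (dyadicAvg k f ((2 * dyadicIndex (k + 1) x : ℤ) * 2 ^ k) +
        dyadicAvg k f ((2 * dyadicIndex (k + 1) x + 1 : ℤ) * 2 ^ k)) / 2 := by
  have hdisj : Disjoint (dyadicPiece k ((2 * dyadicIndex (k + 1) x : ℤ) * 2 ^ k))
      (dyadicPiece k ((2 * dyadicIndex (k + 1) x + 1 : ℤ) * 2 ^ k)) :=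
    disjoint_dyadicPiece (by rw [dyadicIndex_intCast_mul, dyadicIndex_intCast_mul]; omega)
  rw [dyadicAvg, dyadicPiece_add_one,
    setIntegral_union hdisj (measurableSet_dyadicPiece _ _) (hf _) (hf _), dyadicAvg, dyadicAvg,
    zpow_add_one₀ two_ne_zero]
  ring

lemma integrableOn_dyadicPiece_of_factorsThrough {m : ℤ} {f : ℝ → ℝ}
    (hf : f.FactorsThrough (dyadicIndex m)) (k : ℤ) (x : ℝ) :
    IntegrableOn f (dyadicPiece k x) := by
  have fine (l : ℤ) (hl : l ≤ m) (z : ℝ) : IntegrableOn f (dyadicPiece l z) :=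
    (integrableOn_const measure_Ico_lt_top.ne).congr_fun (f := fun _ => f z)
      (fun y hy => (hf (dyadicIndex_factorsThrough hl (mem_dyadicPiece.1 hy))).symm)
      (measurableSet_dyadicPiece l z)
  obtain hk | hk := le_total k m
  · exact fine k hk x
  · induction k, hk using Int.leInduction generalizing x with
    | base => exact fine m le_rfl x
    | succ k _ ih => rw [dyadicPiece_add_one]; exact (ih _).union (ih _)

lemma dyadicAvg_of_factorsThrough {m k : ℤ} {f : ℝ → ℝ} (hf : f.FactorsThrough (dyadicIndex m))
    (hkm : k ≤ m) (x : ℝ) : dyadicAvg k f x = f x := by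
  have hconst : EqOn f (fun _ => f x) (dyadicPiece k x) := fun y hy =>
    hf (dyadicIndex_factorsThrough hkm (mem_dyadicPiece.1 hy))
  rw [dyadicAvg, setIntegral_congr_fun (measurableSet_dyadicPiece k x) hconst, setIntegral_const,
    volume_real_dyadicPiece, smul_eq_mul, inv_mul_cancel_left₀ (by positivity)]

lemma dyadicAvg_finsetSum {ι : Type*} {s : Finset ι} {f : ι → ℝ → ℝ} {k : ℤ} {x : ℝ}
    (hf : ∀ j ∈ s, IntegrableOn (f j) (dyadicPiece k x)) :
    dyadicAvg k (fun y => ∑ j ∈ s, f j y) x = ∑ j ∈ s, dyadicAvg k (f j) x := by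
  simp only [dyadicAvg, integral_finsetSum s hf, Finset.mul_sum]

/-! ### Haar-type functions -/

/-- A Haar-type function of scale `m`: on each dyadic interval of length `2^(m+1)` it is a constant
multiple of the Haar function, which is `1` on the left half and `-1` on the right half. -/
def IsHaarType (m : ℤ) (h : ℝ → ℝ) : Prop :=
  ∃ g : ℝ → ℝ, g.FactorsThrough (dyadicIndex (m + 1)) ∧
    ∀ x, h x = g x * (-1) ^ dyadicIndex m x

namespace IsHaarType

variable {m : ℤ} {h : ℝ → ℝ}

lemma factorsThrough (hh : IsHaarType m h) : h.FactorsThrough (dyadicIndex m) := by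
  obtain ⟨g, hg, hgh⟩ := hh
  intro x y hxy
  rw [hgh, hgh, hg (dyadicIndex_factorsThrough (by omega) hxy), hxy]

lemma mul_factorsThrough (hh : IsHaarType m h) {f : ℝ → ℝ}
    (hf : f.FactorsThrough (dyadicIndex (m + 1))) : IsHaarType m (fun x => f x * h x) := by
  obtain ⟨g, hg, hgh⟩ := hh
  exact ⟨fun x => f x * g x, fun _ _ hxy => congrArg₂ (· * ·) (hf hxy) (hg hxy), fun x => by
    simp only [hgh, mul_assoc]⟩

lemma add_eq_zero_of_siblings (hh : IsHaarType m h) (n : ℤ) :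
    h ((2 * n : ℤ) * 2 ^ m) + h ((2 * n + 1 : ℤ) * 2 ^ m) = 0 := by
  obtain ⟨g, hg, hgh⟩ := hh
  have hsame : g ((2 * n : ℤ) * 2 ^ m) = g ((2 * n + 1 : ℤ) * 2 ^ m) := hg <| by
    rw [dyadicIndex_add_one, dyadicIndex_add_one, dyadicIndex_intCast_mul, dyadicIndex_intCast_mul]
    omega
  rw [hgh, hgh, hsame, dyadicIndex_intCast_mul, dyadicIndex_intCast_mul,
    (even_two_mul n).neg_one_zpow, (odd_two_mul_add_one n).neg_one_zpow]
  ring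

lemma dyadicAvg_eq_zero (hh : IsHaarType m h) {k : ℤ} (hmk : m < k) (x : ℝ) :
    dyadicAvg k h x = 0 := by
  have hint := integrableOn_dyadicPiece_of_factorsThrough hh.factorsThrough
  induction k, Int.add_one_le_of_lt hmk using Int.leInduction generalizing x with
  | base =>
    rw [dyadicAvg_add_one (hint m), dyadicAvg_of_factorsThrough hh.factorsThrough le_rfl,
      dyadicAvg_of_factorsThrough hh.factorsThrough le_rfl, hh.add_eq_zero_of_siblings, zero_div]
  | succ k hk ih =>
    rw [dyadicAvg_add_one (hint k), ih (by omega), ih (by omega), add_zero, zero_div]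

end IsHaarType

lemma IsHaarType.dyadicAvg_finsetSum_eq_sum_filter {ι : Type*} {s : Finset ι} {m : ι → ℤ}
    {h : ι → ℝ → ℝ} (hh : ∀ j ∈ s, IsHaarType (m j) (h j)) (k : ℤ) (x : ℝ) :
    dyadicAvg k (fun y => ∑ j ∈ s, h j y) x = ∑ j ∈ s with k ≤ m j, h j x := by
  rw [dyadicAvg_finsetSum fun j hj =>
    integrableOn_dyadicPiece_of_factorsThrough (hh j hj).factorsThrough k x, Finset.sum_filter]
  refine Finset.sum_congr rfl fun j hj => ?_
  split_ifs with hk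
  · exact dyadicAvg_of_factorsThrough (hh j hj).factorsThrough hk x
  · exact (hh j hj).dyadicAvg_eq_zero (not_le.1 hk) x

/-! ### Walsh functions -/

lemma walshF_eq_prod_range {n N : ℕ} (h : n < 2 ^ N) (y : ℝ) :
    walshF n y =
      ∏ i ∈ Finset.range N, if n.testBit i then (-1 : ℝ) ^ ⌊y * 2 ^ (i + 1)⌋ else 1 := by
  have high_bit {i j : ℕ} (hj : n < 2 ^ j) (hi : i ∉ Finset.range j) : n.testBit i = false :=
    Nat.testBit_lt_two_pow (hj.trans_le (Nat.pow_le_pow_right two_pos (by simpa using hi)))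
  refine Finset.prod_congr_of_eq_on_inter (fun i _ hi => ?_) (fun i _ hi => ?_) fun _ _ _ => rfl
  · simp only [high_bit h hi, Bool.false_eq_true, if_false]
  · simp only [high_bit Nat.lt_two_pow_self hi, Bool.false_eq_true, if_false]

lemma walshF_zero (y : ℝ) : walshF 0 y = 1 := rfl

lemma walshF_one (y : ℝ) : walshF 1 y = (-1) ^ ⌊y * 2⌋ := by
  simp [walshF]

lemma walshF_mul_walshF (m n : ℕ) (y : ℝ) : walshF m y * walshF n y = walshF (m ^^^ n) y := by
  have hm : m < 2 ^ (m + n) :=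
    Nat.lt_two_pow_self.trans_le (Nat.pow_le_pow_right two_pos le_self_add)
  have hn : n < 2 ^ (m + n) :=
    Nat.lt_two_pow_self.trans_le (Nat.pow_le_pow_right two_pos le_add_self)
  have hsq (z : ℤ) : (-1 : ℝ) ^ z * (-1) ^ z = 1 := by
    rw [← mul_zpow, neg_one_mul, neg_neg, one_zpow]
  rw [walshF_eq_prod_range hm, walshF_eq_prod_range hn,
    walshF_eq_prod_range (Nat.xor_lt_two_pow hm hn), ← Finset.prod_mul_distrib]
  refine Finset.prod_congr rfl fun i _ => ?_
  rw [Nat.testBit_xor]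
  cases m.testBit i <;> cases n.testBit i <;> simp [hsq]

lemma abs_walshF (n : ℕ) (y : ℝ) : |walshF n y| = 1 := by
  have h : walshF n y * walshF n y = 1 := by rw [walshF_mul_walshF, Nat.xor_self, walshF_zero]
  exact (abs_eq zero_le_one).2 (mul_self_eq_one_iff.1 h)

lemma walshF_eq_mod_mul_div (n d : ℕ) (y : ℝ) :
    walshF n y = walshF (n % 2 ^ d) y * walshF (n / 2 ^ d) (y * 2 ^ d) := by
  have hn : n < 2 ^ (d + n) :=
    Nat.lt_two_pow_self.trans_le (Nat.pow_le_pow_right two_pos le_add_self)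
  have hdiv : n / 2 ^ d < 2 ^ n := (Nat.div_le_self _ _).trans_lt Nat.lt_two_pow_self
  rw [walshF_eq_prod_range hn, walshF_eq_prod_range (Nat.mod_lt n (Nat.two_pow_pos d)),
    walshF_eq_prod_range hdiv, Finset.prod_range_add]
  congr 1
  · refine Finset.prod_congr rfl fun i hi => ?_
    rw [Nat.testBit_mod_two_pow, decide_eq_true (Finset.mem_range.1 hi), Bool.true_and]
  · refine Finset.prod_congr rfl fun i _ => ?_
    rw [Nat.testBit_div_two_pow, add_comm i d, mul_assoc, ← pow_add, add_assoc]

lemma walshF_eq_mod_mul_leading_bit {n : ℕ} (hn : n ≠ 0) (y : ℝ) :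
    walshF n y =
      walshF (n % 2 ^ Nat.log 2 n) y * (-1) ^ ⌊y * 2 ^ (Nat.log 2 n + 1)⌋ := by
  have hlead : n / 2 ^ Nat.log 2 n = 1 :=
    Nat.div_eq_of_lt_le (by simpa using Nat.pow_log_le_self 2 hn)
      (by simpa [pow_succ'] using Nat.lt_pow_succ_log_self one_lt_two n)
  rw [walshF_eq_mod_mul_div n (Nat.log 2 n), hlead, walshF_one, mul_assoc, ← pow_succ]

lemma walshF_sub_natCast (n m : ℕ) (y : ℝ) : walshF n (y - m) = walshF n y := by
  refine Finset.prod_congr rfl fun i _ => ?_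
  have hfloor : ⌊(y - m) * 2 ^ (i + 1)⌋ = ⌊y * 2 ^ (i + 1)⌋ - 2 * (m * 2 ^ i) := by
    rw [← Int.floor_sub_intCast]
    push_cast
    ring_nf
  rw [hfloor, zpow_sub₀ (by norm_num), (even_two_mul _).neg_one_zpow, div_one]

lemma walshF_factorsThrough {n d : ℕ} (hn : n < 2 ^ d) (k : ℤ) :
    (fun y => walshF n (y / 2 ^ k)).FactorsThrough (dyadicIndex (k - d)) := by
  intro y z hyz
  simp only [walshF_eq_prod_range hn, floor_div_mul_two_pow]
  refine Finset.prod_congr rfl fun i hi => ?_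
  have hi : i < d := Finset.mem_range.1 hi
  rw [dyadicIndex_factorsThrough (by push_cast; omega) hyz]

/-! ### Signed wave packets -/

lemma wavePacket_eq_zero {I : DyadicInterval} (ω : DyadicInterval) {x : ℝ} (hx : x ∉ I.toSet) :
    wavePacket I ω x = 0 :=
  Set.indicator_of_notMem hx _

lemma wavePacket_of_mem {I : DyadicInterval} (ω : DyadicInterval) {x : ℝ} (hx : x ∈ I.toSet) :
    wavePacket I ω x = I.len ^ (-(1 : ℝ) / 2) * walshF ω.n (x / 2 ^ I.k) := by
  have hrescale : (x - I.lo) / I.len = x / 2 ^ I.k - I.n := by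
    rw [DyadicInterval.lo, DyadicInterval.len, sub_div, mul_div_cancel_right₀ _ (by positivity)]
  rw [wavePacket, Set.indicator_of_mem hx, hrescale, walshF_sub_natCast]

lemma sign_wavePacket {I : DyadicInterval} (ω : DyadicInterval) {x : ℝ} (hx : x ∈ I.toSet) :
    Real.sign (wavePacket I ω x) = walshF ω.n (x / 2 ^ I.k) := by
  have hlen : 0 < I.len ^ (-(1 : ℝ) / 2) :=
    Real.rpow_pos_of_pos (by unfold DyadicInterval.len; positivity) _
  rw [wavePacket_of_mem ω hx]
  obtain h | h := eq_or_eq_neg_of_abs_eq (abs_walshF ω.n (x / 2 ^ I.k))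
  · rw [h, mul_one, Real.sign_of_pos hlen]
  · rw [h, mul_neg_one, Real.sign_of_neg (neg_lt_zero.2 hlen)]

lemma sign_wavePacket_mul_wavePacket {I J : DyadicInterval} (hJ : J.toSet ⊆ I.toSet)
    (ω ω' : DyadicInterval) (x : ℝ) :
    Real.sign (wavePacket I ω x) * wavePacket J ω' x =
      walshF ω.n (x / 2 ^ I.k) * wavePacket J ω' x := by
  by_cases hx : x ∈ J.toSet
  · rw [sign_wavePacket ω (hJ hx)]
  · rw [wavePacket_eq_zero ω' hx, mul_zero, mul_zero]

lemma walshF_mul_wavePacket {J ω : DyadicInterval} {k : ℤ} {d : ℕ} (hk : k = J.k + d) (n : ℕ)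
    (x : ℝ) :
    walshF n (x / 2 ^ k) * wavePacket J ω x =
      walshF (n % 2 ^ d) (x / 2 ^ k) * wavePacket J ⟨n / 2 ^ d ^^^ ω.n, ω.k⟩ x := by
  by_cases hx : x ∈ J.toSet
  · have hscale : x / 2 ^ k * 2 ^ d = x / 2 ^ J.k := by
      rw [hk, zpow_add₀ two_ne_zero, zpow_natCast]
      field_simp
    rw [wavePacket_of_mem _ hx, wavePacket_of_mem _ hx, ← walshF_mul_walshF,
      walshF_eq_mod_mul_div n d, hscale]
    ring
  · rw [wavePacket_eq_zero _ hx, wavePacket_eq_zero _ hx, mul_zero, mul_zero]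

lemma wavePacket_factorsThrough {ω : DyadicInterval} {d : ℕ} (hω : ω.n < 2 ^ d)
    (J : DyadicInterval) : (wavePacket J ω).FactorsThrough (dyadicIndex (J.k - d)) := by
  intro x y hxy
  have hmem : x ∈ J.toSet ↔ y ∈ J.toSet := by
    rw [DyadicInterval.mem_toSet, DyadicInterval.mem_toSet,
      dyadicIndex_factorsThrough (by omega) hxy]
  by_cases hx : x ∈ J.toSet
  · rw [wavePacket_of_mem ω hx, wavePacket_of_mem ω (hmem.1 hx)]
    exact congrArg _ (walshF_factorsThrough hω J.k hxy)
  · rw [wavePacket_eq_zero ω hx, wavePacket_eq_zero ω (mt hmem.2 hx)]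

lemma isHaarType_wavePacket (J : DyadicInterval) {ω : DyadicInterval} (hω : ω.n ≠ 0) :
    IsHaarType (J.k - (Nat.log 2 ω.n + 1)) (wavePacket J ω) := by
  refine ⟨wavePacket J ⟨ω.n % 2 ^ Nat.log 2 ω.n, ω.k⟩, ?_, fun x => ?_⟩
  · rw [sub_add_eq_sub_sub, sub_add_cancel]
    exact wavePacket_factorsThrough (Nat.mod_lt _ (Nat.two_pow_pos _)) J
  · by_cases hx : x ∈ J.toSet
    · rw [wavePacket_of_mem _ hx, wavePacket_of_mem _ hx, walshF_eq_mod_mul_leading_bit hω,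
        floor_div_mul_two_pow, mul_assoc, Nat.cast_add_one]
    · rw [wavePacket_eq_zero _ hx, wavePacket_eq_zero _ hx, zero_mul]

lemma isHaarType_walshF_mul_wavePacket {J ω : DyadicInterval} {k : ℤ} {n d : ℕ}
    (hk : k = J.k + d) (hn : n / 2 ^ d ≠ ω.n) :
    IsHaarType (J.k - (Nat.log 2 (n / 2 ^ d ^^^ ω.n) + 1))
      (fun x => walshF n (x / 2 ^ k) * wavePacket J ω x) := by
  have hlow : (fun x => walshF (n % 2 ^ d) (x / 2 ^ k)).FactorsThrough (dyadicIndex J.k) := by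
    simpa [hk] using walshF_factorsThrough (Nat.mod_lt n (Nat.two_pow_pos d)) k
  have hcoarse : J.k - (Nat.log 2 (n / 2 ^ d ^^^ ω.n) + 1) + 1 ≤ J.k := by omega
  have hpacket := isHaarType_wavePacket J (ω := ⟨n / 2 ^ d ^^^ ω.n, ω.k⟩) (Nat.xor_ne_zero_iff.2 hn)
  rw [funext (walshF_mul_wavePacket hk n)]
  exact hpacket.mul_factorsThrough fun _ _ hxy => hlow (dyadicIndex_factorsThrough hcoarse hxy)

lemma Quartile.xor_freq_n (P : Quartile) (i j : Fin 4) :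
    (P.freq i).n ^^^ (P.freq j).n = i.val ^^^ j.val := by
  refine Nat.eq_of_testBit_eq fun b => ?_
  have hbit (l : Fin 4) : (P.freq l).n.testBit b =
      if b < 2 then l.val.testBit b else P.ω.n.testBit (b - 2) :=
    Nat.testBit_two_pow_mul_add (i := 2) P.ω.n l.isLt b
  have hhigh (hb : ¬b < 2) (l : Fin 4) : l.val.testBit b = false :=
    Nat.testBit_lt_two_pow (l.isLt.trans_le (Nat.pow_le_pow_right two_pos (not_lt.1 hb)))
  rw [Nat.testBit_xor, Nat.testBit_xor, hbit, hbit]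
  split_ifs with hb
  · rfl
  · rw [hhigh hb, hhigh hb, Bool.xor_self, Bool.xor_self]

lemma Quartile.isHaarType_walshF_mul_wp {P : Quartile} {It : DyadicInterval} {ξ : ℝ} {i i' : Fin 4}
    (hne : i ≠ i') (hP : P.I.toSet ⊆ It.toSet) (hξ : ξ ∈ (P.freq i').toSet) :
    IsHaarType (P.I.k - (Nat.log 2 (i'.val ^^^ i.val) + 1))
      (fun x => walshF (topFreq It ξ).n (x / 2 ^ It.k) * P.wp i x) := by
  obtain ⟨d, hd⟩ := Int.le.dest (DyadicInterval.k_le_of_toSet_subset hP)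
  have hfreq : (topFreq It ξ).n / 2 ^ d = (P.freq i').n :=
    topFreq_n_div_two_pow hξ (by have := P.area; simp only [freq]; omega)
  have hne' : (P.freq i').n ≠ (P.freq i).n := by
    simpa [freq, Fin.val_inj] using hne.symm
  have h := isHaarType_walshF_mul_wavePacket hd.symm (hfreq.trans_ne hne')
  rwa [hfreq, xor_freq_n] at h

lemma IsOverlapping.dyadicAvg_signed_treeSum {i i' : Fin 4} (hne : i ≠ i') {T : Finset Quartile}
    {ξ : ℝ} {It : DyadicInterval} (hT : IsOverlapping i' T ξ It) (c : Quartile → ℝ) (k : ℤ)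
    (x : ℝ) :
    dyadicAvg k
        (fun y => Real.sign (wavePacket It (topFreq It ξ) y) * ∑ P ∈ T, c P * P.wp i y) x =
      walshF (topFreq It ξ).n (x / 2 ^ It.k) *
        ∑ P ∈ T with k + (Nat.log 2 (i'.val ^^^ i.val) + 1) ≤ P.I.k, c P * P.wp i x := by
  obtain ⟨⟨-, hsub⟩, hξ⟩ := hT
  set w : ℝ → ℝ := fun y => walshF (topFreq It ξ).n (y / 2 ^ It.k)
  have hsigned (y : ℝ) :
      Real.sign (wavePacket It (topFreq It ξ) y) * ∑ P ∈ T, c P * P.wp i y =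
        ∑ P ∈ T, c P * (w y * P.wp i y) := by
    rw [Finset.mul_sum]
    refine Finset.sum_congr rfl fun P hP => ?_
    rw [mul_left_comm, Quartile.wp, sign_wavePacket_mul_wavePacket (hsub P hP).1]
  have hhaar (P) (hP : P ∈ T) : IsHaarType (P.I.k - (Nat.log 2 (i'.val ^^^ i.val) + 1))
      (fun y => c P * (w y * P.wp i y)) :=
    (Quartile.isHaarType_walshF_mul_wp hne (hsub P hP).1 (hξ P hP)).mul_factorsThrough
      (f := fun _ => c P) fun _ _ _ => rfl
  simp only [hsigned, IsHaarType.dyadicAvg_finsetSum_eq_sum_filter hhaar, le_sub_iff_add_le]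
  simp only [mul_left_comm _ (w x), ← Finset.mul_sum]
  rfl

/-! ### Variation seminorms -/

lemma varNorm_const_mul_of_abs_eq_one (r : ℝ) (S : Set ℤ) (g : ℤ → ℝ) {e : ℝ} (he : |e| = 1) :
    varNorm r S (fun k => e * g k) = varNorm r S g := by
  simp only [varNorm, ← mul_sub, abs_mul, he, one_mul]

lemma varNorm_comp_add_right (r : ℝ) (S : Set ℤ) (g : ℤ → ℝ) (s : ℤ) :
    varNorm r ((· + s) ⁻¹' S) (fun k => g (k + s)) = varNorm r S g := by
  refine iSup_congr fun N => ?_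
  refine ((Equiv.refl ℕ).arrowCongr (Equiv.addRight s)).surjective.iSup_congr _ fun k => ?_
  simp [StrictMono]

theorem variation_of_truncated_tree_sums_general
    (r : ℝ) (_hr : 0 < r) (i i' : Fin 4) (hne : i ≠ i')
    (T : Finset Quartile) (ξ : ℝ) (It : DyadicInterval)
    (hT : IsOverlapping i' T ξ It)
    (c : Quartile → ℝ) (x : ℝ) :
    varNorm r Set.univ (fun k => ∑ P ∈ T.filter (fun P => k ≤ P.I.k), c P * P.wp i x) =
      varNorm r Set.univ (fun k =>
        dyadicAvg k
          (fun y => Real.sign (wavePacket It (topFreq It ξ) y) * ∑ P ∈ T, c P * P.wp i y) x) := by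
  simp only [hT.dyadicAvg_signed_treeSum hne]
  rw [varNorm_const_mul_of_abs_eq_one r _ _ (abs_walshF _ _)]
  exact (varNorm_comp_add_right r Set.univ
    (fun k => ∑ P ∈ T with k ≤ P.I.k, c P * P.wp i x) _).symm

/-- **Equation (2.4).** For an `i'`-overlapping tree `T` and `i ≠ i'`, the `r`-variation of the
truncated tree sums equals the `r`-variation of the dyadic averages of the full (signed) tree
sum: for every `x ∈ [0,∞)`,
`‖∑_{P ∈ T, |I_P| ≥ 2^k} c_P φ_{P_i}(x)‖_{V^r_k}
  = ‖A_k[sgn(φ_{p_T}) ∑_{P ∈ T} c_P φ_{P_i}](x)‖_{V^r_k}`. -/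
theorem variation_of_truncated_tree_sums
    (r : ℝ) (hr : 1 ≤ r) (i i' : Fin 4) (hne : i ≠ i')
    (T : Finset Quartile) (ξ : ℝ) (It : DyadicInterval)
    (hT : IsOverlapping i' T ξ It)
    (c : Quartile → ℝ) (x : ℝ) (hx : 0 ≤ x) :
    varNorm r Set.univ (fun k => ∑ P ∈ T.filter (fun P => k ≤ P.I.k), c P * P.wp i x) =
      varNorm r Set.univ (fun k =>
        dyadicAvg k
          (fun y => Real.sign (wavePacket It (topFreq It ξ) y) * ∑ P ∈ T, c P * P.wp i y) x) :=
  variation_of_truncated_tree_sums_general r (zero_lt_one.trans_le hr) i i' hne T ξ It hT c x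
end

section
/- (John–Nirenberg type lemma.) There is an absolute constant C such that the following holds. Let 𝐏 be a collection of quartiles, i ∈ {1,2,3,4}, and {c(P)}_{P ∈ 𝐏} real coefficients. Set A_{1,∞} = sup over all i-lacunary trees T ⊆ 𝐏 of |I_T|^{-1} ‖ (∑_{P∈T} |c(P)|² 1_{I_P}/|I_P|)^{1/2} ‖_{L^{1,∞}}, and A_2 = sup over all i-lacunary trees T ⊆ 𝐏 of |I_T|^{-1/2} ‖ (∑_{P∈T} |c(P)|² 1_{I_P}/|I_P|)^{1/2} ‖_{L²}. Then A_2 ≤ C A_{1,∞}. -/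
/-!
Write `F_T = ∑_{P ∈ T} w_P 1_{I_P}`, where the `I_P` are pairwise nested or disjoint, and let
`T_P` consist of the `Q ∈ T` with `I_Q ⊆ I_P`. Suppose that for every `P` the set
`G_P = {x ∈ I_P : F_{T_P}(x) ≤ L}` fills at least half of `I_P`. Then by Fubini
`∫ F_T = ∑ w_P |I_P| ≤ 2 ∑ w_P |G_P| = 2 ∫ ∑ w_P 1_{G_P}`.
The intervals of those `P` with `x ∈ G_P` form a chain; if `I_P` is the largest of them, then all
the others belong to `T_P`, so the last integrand is at most `F_{T_P}(x) ≤ L`. Hence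
`∫ F_T ≤ 2 L |I_T|`. For the square of the square function, the weak-type bound with constant `b`
gives this hypothesis with `L = (2b)²`.
-/

open MeasureTheory Set
open scoped ENNReal

/-- The weak-`L¹` quasinorm `‖g‖_{L^{1,∞}} = sup_{t>0} t |{x : |g(x)| > t}|`. -/
noncomputable def weakL1 (g : ℝ → ℝ) : ℝ≥0∞ :=
  ⨆ (t : ℝ) (_ : 0 < t), ENNReal.ofReal t * volume {x : ℝ | t < |g x|}

section Laminar

variable {ι X : Type*}

/-- A laminar family of sets: any two members are nested or disjoint. Dyadic intervals are the
model case. -/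
def IsLaminar (E : ι → Set X) : Prop :=
  ∀ i j, E i ⊆ E j ∨ E j ⊆ E i ∨ Disjoint (E i) (E j)

lemma IsLaminar.comp {κ : Type*} {E : ι → Set X} (hE : IsLaminar E) (f : κ → ι) :
    IsLaminar (E ∘ f) :=
  fun i j => hE (f i) (f j)

open scoped Classical in
/-- The members `j` of a finite family with `E j ⊆ B`; for a tree of quartiles and `B` a dyadic
interval, this is the subtree with top `B`. -/
noncomputable def subfamily (E : ι → Set X) (s : Finset ι) (B : Set X) : Finset ι :=
  {j ∈ s | E j ⊆ B}

lemma mem_subfamily {E : ι → Set X} {s : Finset ι} {B : Set X} {j : ι} :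
    j ∈ subfamily E s B ↔ j ∈ s ∧ E j ⊆ B := by
  simp [subfamily]

lemma subfamily_subset (E : ι → Set X) (s : Finset ι) (B : Set X) : subfamily E s B ⊆ s :=
  fun _ hj => (mem_subfamily.1 hj).1

/-- The function `∑ i ∈ s, w i • 1_{E i}`. -/
noncomputable def indicatorSum (E : ι → Set X) (w : ι → ℝ≥0∞) (s : Finset ι) (x : X) : ℝ≥0∞ :=
  ∑ i ∈ s, (E i).indicator (fun _ => w i) x

lemma indicatorSum_mono (E : ι → Set X) (w : ι → ℝ≥0∞) (x : X) :
    Monotone fun s => indicatorSum E w s x :=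
  fun _ _ hst => Finset.sum_le_sum_of_subset hst

lemma indicatorSum_eq_sum_of_mem {E : ι → Set X} {w : ι → ℝ≥0∞} {s : Finset ι} {x : X}
    (hx : ∀ i ∈ s, x ∈ E i) : indicatorSum E w s x = ∑ i ∈ s, w i :=
  Finset.sum_congr rfl fun i hi => indicator_of_mem (hx i hi) _

/-- The part of `E i` on which the members of the family below `E i` add up to at most `L`. -/
def sublevelPart (E : ι → Set X) (w : ι → ℝ≥0∞) (s : Finset ι) (L : ℝ≥0∞) (i : ι) : Set X :=
  {x ∈ E i | indicatorSum E w (subfamily E s (E i)) x ≤ L}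

lemma IsLaminar.indicatorSum_sublevelPart_le {E : ι → Set X} (hE : IsLaminar E)
    (w : ι → ℝ≥0∞) {s : Finset ι} {B : Set X} (hB : ∀ i ∈ s, E i ⊆ B) (L : ℝ≥0∞) (x : X) :
    indicatorSum (sublevelPart E w s L) w s x ≤ B.indicator (fun _ => L) x := by
  classical
  set t := {i ∈ s | x ∈ sublevelPart E w s L i} with ht
  have mem_t {i : ι} (hi : i ∈ t) : i ∈ s ∧ x ∈ sublevelPart E w s L i := Finset.mem_filter.1 hi
  have hsum : indicatorSum (sublevelPart E w s L) w s x = ∑ i ∈ t, w i := by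
    simp only [indicatorSum, indicator_apply, ht, Finset.sum_filter]
  rcases t.eq_empty_or_nonempty with h_empty | h_nonempty
  · simp [hsum, h_empty]
  obtain ⟨i, hi, hmax⟩ := Finset.exists_maximalFor E t h_nonempty
  have hbelow : t ⊆ subfamily E s (E i) := fun j hj => by
    refine mem_subfamily.2 ⟨(mem_t hj).1, ?_⟩
    rcases hE i j with h | h | h
    · exact hmax hj h
    · exact h
    · exact absurd (mem_t hj).2.1 (disjoint_left.1 h (mem_t hi).2.1)
  calc indicatorSum (sublevelPart E w s L) w s x
      = indicatorSum E w t x := by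
        rw [hsum, indicatorSum_eq_sum_of_mem fun j hj => (mem_t hj).2.1]
    _ ≤ indicatorSum E w (subfamily E s (E i)) x := indicatorSum_mono E w x hbelow
    _ ≤ L := (mem_t hi).2.2
    _ = B.indicator (fun _ => L) x := by
        rw [indicator_of_mem (hB i (mem_t hi).1 (mem_t hi).2.1)]

variable [MeasurableSpace X]

lemma measurable_indicatorSum {E : ι → Set X} (hE : ∀ i, MeasurableSet (E i))
    (w : ι → ℝ≥0∞) (s : Finset ι) : Measurable (indicatorSum E w s) :=
  Finset.measurable_sum s fun i _ => measurable_const.indicator (hE i)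

lemma lintegral_indicatorSum (μ : Measure X) {E : ι → Set X} (hE : ∀ i, MeasurableSet (E i))
    (w : ι → ℝ≥0∞) (s : Finset ι) :
    ∫⁻ x, indicatorSum E w s x ∂μ = ∑ i ∈ s, w i * μ (E i) := by
  simp only [indicatorSum]
  rw [lintegral_finsetSum _ fun i _ => measurable_const.indicator (hE i)]
  exact Finset.sum_congr rfl fun i _ => lintegral_indicator_const (hE i) (w i)

lemma measurableSet_sublevelPart {E : ι → Set X} (hE : ∀ i, MeasurableSet (E i))
    (w : ι → ℝ≥0∞) (s : Finset ι) (L : ℝ≥0∞) (i : ι) :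
    MeasurableSet (sublevelPart E w s L i) :=
  (hE i).inter (measurable_indicatorSum hE w _ measurableSet_Iic)

theorem IsLaminar.lintegral_indicatorSum_le {μ : Measure X} {E : ι → Set X} (hE : IsLaminar E)
    (hEm : ∀ i, MeasurableSet (E i)) {w : ι → ℝ≥0∞} {s : Finset ι} {B : Set X}
    (hB : ∀ i ∈ s, E i ⊆ B) {C L : ℝ≥0∞}
    (hC : ∀ i ∈ s, μ (E i) ≤ C * μ (sublevelPart E w s L i)) :
    ∫⁻ x, indicatorSum E w s x ∂μ ≤ C * (L * μ B) :=
  calc ∫⁻ x, indicatorSum E w s x ∂μ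
      = ∑ i ∈ s, w i * μ (E i) := lintegral_indicatorSum μ hEm w s
    _ ≤ ∑ i ∈ s, w i * (C * μ (sublevelPart E w s L i)) := by gcongr with i hi; exact hC i hi
    _ = C * ∑ i ∈ s, w i * μ (sublevelPart E w s L i) := by
        simp only [Finset.mul_sum, mul_left_comm]
    _ = C * ∫⁻ x, indicatorSum (sublevelPart E w s L) w s x ∂μ := by
        rw [lintegral_indicatorSum μ (measurableSet_sublevelPart hEm w s L)]
    _ ≤ C * ∫⁻ x, B.indicator (fun _ => L) x ∂μ := by
        gcongr with x
        exact hE.indicatorSum_sublevelPart_le w hB L x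
    _ ≤ C * (L * μ B) := by
        gcongr
        exact lintegral_indicator_const_le B L

lemma measure_le_two_mul_measure_inter_of_sdiff_le_half {μ : Measure X} {s t : Set X} (hs : μ s ≠ ∞)
    (h : μ (s \ t) ≤ μ s / 2) : μ s ≤ 2 * μ (s ∩ t) := by
  have h_half : μ s / 2 ≤ μ (s ∩ t) := by
    rw [← ENNReal.sub_half hs, tsub_le_iff_right]
    exact (measure_le_inter_add_sdiff μ s t).trans (by gcongr)
  rwa [mul_comm, ← ENNReal.div_le_iff two_ne_zero ENNReal.ofNat_ne_top]

end Laminar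

section WeakL1

lemma mul_volume_lt_enorm_le_weakL1 (g : ℝ → ℝ) (t : ℝ≥0∞) :
    t * volume {x | t < ‖g x‖ₑ} ≤ weakL1 g := by
  rcases eq_or_ne t 0 with rfl | ht0
  · simp
  rcases eq_or_ne t ∞ with rfl | ht
  · simp
  have hpos : 0 < t.toReal := ENNReal.toReal_pos ht0 ht
  have hset : {x | t < ‖g x‖ₑ} = {x | t.toReal < |g x|} := by
    ext x
    simp only [mem_ofPred_eq, Real.enorm_eq_ofReal_abs, ENNReal.lt_ofReal_iff_toReal_lt ht]
  calc t * volume {x | t < ‖g x‖ₑ}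
      = ENNReal.ofReal t.toReal * volume {x | t.toReal < |g x|} := by
        rw [hset, ENNReal.ofReal_toReal ht]
    _ ≤ weakL1 g :=
        le_iSup₂ (f := fun (t : ℝ) (_ : 0 < t) => ENNReal.ofReal t * volume {x | t < |g x|})
          t.toReal hpos

variable {g : ℝ → ℝ}

lemma ae_eq_zero_of_weakL1_eq_zero (hg : weakL1 g = 0) : g =ᵐ[volume] 0 := by
  have hnull (n : ℕ) : ∀ᵐ x, ‖g x‖ₑ ≤ (n : ℝ≥0∞)⁻¹ := by
    have h := mul_volume_lt_enorm_le_weakL1 g (n : ℝ≥0∞)⁻¹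
    rw [hg, nonpos_iff_eq_zero, mul_eq_zero, ENNReal.inv_eq_zero] at h
    simpa only [ae_iff, not_le] using h.resolve_left (ENNReal.natCast_ne_top n)
  filter_upwards [ae_all_iff.2 hnull] with x hx
  refine enorm_eq_zero.1 (nonpos_iff_eq_zero.1 ?_)
  exact ge_of_tendsto' ENNReal.tendsto_inv_nat_nhds_zero hx

lemma volume_lt_enorm_le_div_of_weakL1_le {m b θ : ℝ≥0∞} (hg : weakL1 g ≤ m * b) (hθ₀ : θ ≠ 0)
    (hθ : θ ≠ ∞) : volume {x | θ * b < ‖g x‖ₑ} ≤ m / θ := by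
  rcases eq_or_ne b 0 with rfl | hb₀
  · have hnull : volume {x | ¬g x = 0} = 0 :=
      ae_iff.1 (ae_eq_zero_of_weakL1_eq_zero (by simpa using hg))
    simp [pos_iff_ne_zero, hnull]
  rcases eq_or_ne b ∞ with rfl | hb
  · simp [ENNReal.mul_top hθ₀]
  rw [ENNReal.le_div_iff_mul_le (.inl hθ₀) (.inl hθ), ← ENNReal.mul_le_mul_iff_left hb₀ hb]
  calc volume {x | θ * b < ‖g x‖ₑ} * θ * b
      = θ * b * volume {x | θ * b < ‖g x‖ₑ} := by ring
    _ ≤ m * b := (mul_volume_lt_enorm_le_weakL1 g _).trans hg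

end WeakL1

namespace DyadicInterval

lemma len_pos (I : DyadicInterval) : 0 < I.len := zpow_pos two_pos _

lemma measurableSet_toSet (I : DyadicInterval) : MeasurableSet I.toSet := measurableSet_Ico

lemma volume_toSet (I : DyadicInterval) : volume I.toSet = ENNReal.ofReal I.len := by
  simp [toSet]

lemma mem_toSet_iff_floor {I : DyadicInterval} {x : ℝ} : x ∈ I.toSet ↔ ⌊x / 2 ^ I.k⌋ = I.n := by
  have h : (0 : ℝ) < 2 ^ I.k := zpow_pos two_pos _
  rw [Int.floor_eq_iff, le_div_iff₀ h, div_lt_iff₀ h, add_one_mul]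
  rfl

lemma floor_div_two_zpow_of_le {k l : ℤ} (h : k ≤ l) (x : ℝ) :
    ⌊x / 2 ^ l⌋ = ⌊x / 2 ^ k⌋ / 2 ^ (l - k).toNat := by
  obtain ⟨m, rfl⟩ := Int.le.dest h
  rw [zpow_add₀ two_ne_zero, zpow_natCast, ← div_div]
  simpa using Int.floor_div_natCast (x / 2 ^ k) (2 ^ m)

lemma toSet_subset_of_mem {I J : DyadicInterval} {x : ℝ} (hI : x ∈ I.toSet) (hJ : x ∈ J.toSet)
    (hk : I.k ≤ J.k) : I.toSet ⊆ J.toSet := fun y hy => by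
  rw [mem_toSet_iff_floor] at *
  rw [floor_div_two_zpow_of_le hk, hy, ← hI, ← floor_div_two_zpow_of_le hk, hJ]

lemma isLaminar_toSet : IsLaminar toSet := fun I J => by
  by_contra! ⟨hIJ, hJI, hdisj⟩
  obtain ⟨x, hI, hJ⟩ := not_disjoint_iff.1 hdisj
  rcases le_total I.k J.k with h | h
  · exact hIJ (toSet_subset_of_mem hI hJ h)
  · exact hJI (toSet_subset_of_mem hJ hI h)

end DyadicInterval

section SquareFunction

variable {ι : Type*} {I : ι → DyadicInterval} {c : ι → ℝ} {T : Finset ι}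

/-- The dyadic square function `(∑_{P ∈ T} |c(P)|² 1_{I_P}/|I_P|)^{1/2}`. -/
noncomputable def squareFunction (I : ι → DyadicInterval) (c : ι → ℝ) (T : Finset ι) (x : ℝ) : ℝ :=
  √(∑ P ∈ T, c P ^ 2 * (I P).toSet.indicator (fun _ => (1 : ℝ)) x / (I P).len)

lemma enorm_squareFunction_sq (I : ι → DyadicInterval) (c : ι → ℝ) (T : Finset ι) (x : ℝ) :
    ‖squareFunction I c T x‖ₑ ^ 2 =
      indicatorSum (fun P => (I P).toSet) (fun P => ENNReal.ofReal (c P ^ 2 / (I P).len)) T x := by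
  have hterm (P : ι) : c P ^ 2 * (I P).toSet.indicator (fun _ => (1 : ℝ)) x / (I P).len =
      (I P).toSet.indicator (fun _ => c P ^ 2 / (I P).len) x := by
    by_cases hx : x ∈ (I P).toSet <;> simp [hx]
  have hnonneg (P : ι) : 0 ≤ (I P).toSet.indicator (fun _ => c P ^ 2 / (I P).len) x :=
    indicator_nonneg (fun _ _ => div_nonneg (sq_nonneg _) (I P).len_pos.le) x
  rw [squareFunction, Real.enorm_of_nonneg (Real.sqrt_nonneg _),
    ← ENNReal.ofReal_pow (Real.sqrt_nonneg _)]
  simp only [hterm]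
  rw [Real.sq_sqrt (Finset.sum_nonneg fun P _ => hnonneg P),
    ENNReal.ofReal_sum_of_nonneg fun P _ => hnonneg P]
  refine Finset.sum_congr rfl fun P _ => ?_
  by_cases hx : x ∈ (I P).toSet <;> simp [hx]

theorem lintegral_squareFunction_sq_le_of_weakL1_le {B : Set ℝ} (hB : ∀ P ∈ T, (I P).toSet ⊆ B)
    {b : ℝ≥0∞} (hb : ∀ P ∈ T,
      weakL1 (squareFunction I c (subfamily (fun Q => (I Q).toSet) T (I P).toSet)) ≤
        ENNReal.ofReal (I P).len * b) :
    ∫⁻ x, ‖squareFunction I c T x‖ₑ ^ 2 ≤ 8 * b ^ 2 * volume B := by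
  set E : ι → Set ℝ := fun P => (I P).toSet
  set w : ι → ℝ≥0∞ := fun P => ENNReal.ofReal (c P ^ 2 / (I P).len)
  have hhalf : ∀ P ∈ T, volume (E P) ≤ 2 * volume (sublevelPart E w T ((2 * b) ^ 2) P) := by
    intro P hP
    have hvol : volume (E P) = ENNReal.ofReal (I P).len := (I P).volume_toSet
    refine measure_le_two_mul_measure_inter_of_sdiff_le_half (hvol ▸ ENNReal.ofReal_ne_top) ?_
    calc volume (E P \ {x | indicatorSum E w (subfamily E T (E P)) x ≤ (2 * b) ^ 2})
        ≤ volume {x | 2 * b < ‖squareFunction I c (subfamily E T (E P)) x‖ₑ} := by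
          refine measure_mono fun x hx => ?_
          rw [mem_sdiff, mem_ofPred_eq, not_le, ← enorm_squareFunction_sq] at hx
          exact lt_of_pow_lt_pow_left' 2 hx.2
      _ ≤ volume (E P) / 2 := by
          rw [hvol]
          exact volume_lt_enorm_le_div_of_weakL1_le (hb P hP) two_ne_zero ENNReal.ofNat_ne_top
  calc ∫⁻ x, ‖squareFunction I c T x‖ₑ ^ 2
      = ∫⁻ x, indicatorSum E w T x := lintegral_congr fun x => enorm_squareFunction_sq I c T x
    _ ≤ 2 * ((2 * b) ^ 2 * volume B) :=
        (DyadicInterval.isLaminar_toSet.comp I).lintegral_indicatorSum_le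
          (fun P => (I P).measurableSet_toSet) hB hhalf
    _ = 8 * b ^ 2 * volume B := by ring

end SquareFunction

lemma rpow_neg_half_mul_rpow_half_le {m v K : ℝ≥0∞} (hm₀ : m ≠ 0) (hm : m ≠ ∞)
    (h : v ≤ m * K ^ 2) : m ^ (-(1 : ℝ) / 2) * v ^ ((1 : ℝ) / 2) ≤ K :=
  calc m ^ (-(1 : ℝ) / 2) * v ^ ((1 : ℝ) / 2)
      ≤ m ^ (-(1 : ℝ) / 2) * (m * K ^ 2) ^ ((1 : ℝ) / 2) := by gcongr
    _ = m ^ (-(1 : ℝ) / 2) * m ^ ((1 : ℝ) / 2) * (K ^ (2 : ℝ)) ^ ((1 : ℝ) / 2) := by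
        rw [ENNReal.mul_rpow_of_nonneg _ _ (by norm_num), ENNReal.rpow_two, mul_assoc]
    _ = K := by
        rw [← ENNReal.rpow_add _ _ hm₀ hm, ← ENNReal.rpow_mul]
        norm_num

lemma IsLacunary.subset_top {i : Fin 4} {T : Finset Quartile} {ξ : ℝ} {J : DyadicInterval}
    (hT : IsLacunary i T ξ J) : ∀ P ∈ T, P.I.toSet ⊆ J.toSet := by
  obtain ⟨j, -, ⟨-, hJ⟩, -⟩ := hT
  exact fun P hP => (hJ P hP).1

lemma IsLacunary.subfamily {i : Fin 4} {T : Finset Quartile} {ξ : ℝ} {J : DyadicInterval}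
    (hT : IsLacunary i T ξ J) (J' : DyadicInterval) :
    IsLacunary i (subfamily (fun P => P.I.toSet) T J'.toSet) ξ J' := by
  obtain ⟨j, hji, ⟨hξ, hTξ⟩, hj⟩ := hT
  refine ⟨j, hji, ⟨hξ, fun P hP => ?_⟩, fun P hP => hj P (mem_subfamily.1 hP).1⟩
  exact ⟨(mem_subfamily.1 hP).2, (hTξ P (mem_subfamily.1 hP).1).2⟩

/-- The quantity `A_{1,∞}`: the supremum over `i`-lacunary trees `T ⊆ Ps` of `|I_T|⁻¹` times the
`L^{1,∞}` quasinorm of the square function of `T`. -/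
noncomputable def weakTreeSize (Ps : Set Quartile) (i : Fin 4) (c : Quartile → ℝ) : ℝ≥0∞ :=
  ⨆ (T : Finset Quartile) (ξ : ℝ) (J : DyadicInterval)
    (_ : IsLacunary i T ξ J) (_ : (T : Set Quartile) ⊆ Ps),
    (ENNReal.ofReal J.len)⁻¹ * weakL1 (squareFunction Quartile.I c T)

lemma IsLacunary.weakL1_squareFunction_le {Ps : Set Quartile} {i : Fin 4} {T : Finset Quartile}
    {ξ : ℝ} {J : DyadicInterval} (hT : IsLacunary i T ξ J) (hTPs : (T : Set Quartile) ⊆ Ps)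
    (c : Quartile → ℝ) :
    weakL1 (squareFunction Quartile.I c T) ≤ ENNReal.ofReal J.len * weakTreeSize Ps i c := by
  rw [← ENNReal.inv_mul_le_iff (ENNReal.ofReal_pos.2 J.len_pos).ne' ENNReal.ofReal_ne_top]
  exact le_iSup_of_le T <| le_iSup_of_le ξ <| le_iSup_of_le J <| le_iSup_of_le hT <|
    le_iSup_of_le hTPs le_rfl

theorem IsLacunary.lintegral_squareFunction_sq_le {Ps : Set Quartile} {i : Fin 4}
    {T : Finset Quartile} {ξ : ℝ} {J : DyadicInterval} (hT : IsLacunary i T ξ J)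
    (hTPs : (T : Set Quartile) ⊆ Ps) (c : Quartile → ℝ) :
    ∫⁻ x, ‖squareFunction Quartile.I c T x‖ₑ ^ 2 ≤
      8 * weakTreeSize Ps i c ^ 2 * ENNReal.ofReal J.len := by
  rw [← J.volume_toSet]
  refine lintegral_squareFunction_sq_le_of_weakL1_le hT.subset_top fun P _ => ?_
  refine (hT.subfamily P.I).weakL1_squareFunction_le (fun Q hQ => hTPs ?_) c
  exact subfamily_subset _ _ _ hQ

/-- **Lemma 3.4 (John–Nirenberg type).** There is an absolute constant `C` such that, for any
collection of quartiles `Ps`, any `i`, and any coefficients `c`,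
`A_2 ≤ C A_{1,∞}`, where the two quantities are the suprema over `i`-lacunary trees `T ⊆ Ps` of
`|I_T|^{-1/2} ‖(∑_{P∈T} |c(P)|² 1_{I_P}/|I_P|)^{1/2}‖_{L²}` and
`|I_T|^{-1} ‖(∑_{P∈T} |c(P)|² 1_{I_P}/|I_P|)^{1/2}‖_{L^{1,∞}}` respectively. -/
theorem john_nirenberg_type :
    ∃ C : ℝ≥0∞, C ≠ ⊤ ∧
      ∀ (Ps : Set Quartile) (i : Fin 4) (c : Quartile → ℝ),
      (⨆ (T : Finset Quartile) (ξ : ℝ) (It : DyadicInterval)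
          (_ : IsLacunary i T ξ It) (_ : (T : Set Quartile) ⊆ Ps),
          (ENNReal.ofReal It.len) ^ (-(1 : ℝ) / 2) *
            (∫⁻ x, ENNReal.ofReal
                (Real.sqrt (∑ P ∈ T, c P ^ 2 * P.I.toSet.indicator (fun _ => (1 : ℝ)) x / P.I.len))
              ^ (2 : ℝ)) ^ ((1 : ℝ) / 2))
        ≤ C *
          ⨆ (T : Finset Quartile) (ξ : ℝ) (It : DyadicInterval)
            (_ : IsLacunary i T ξ It) (_ : (T : Set Quartile) ⊆ Ps),
            (ENNReal.ofReal It.len)⁻¹ *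
              weakL1 (fun x =>
                Real.sqrt (∑ P ∈ T, c P ^ 2 * P.I.toSet.indicator (fun _ => (1 : ℝ)) x / P.I.len)) := by
  refine ⟨3, ENNReal.ofNat_ne_top, fun Ps i c => ?_⟩
  change _ ≤ 3 * weakTreeSize Ps i c
  refine iSup_le fun T => iSup_le fun ξ => iSup_le fun J => iSup_le fun hT => iSup_le fun hTPs => ?_
  have hlen : ENNReal.ofReal J.len ≠ 0 := (ENNReal.ofReal_pos.2 J.len_pos).ne'
  refine rpow_neg_half_mul_rpow_half_le hlen ENNReal.ofReal_ne_top ?_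
  calc _ = ∫⁻ x, ‖squareFunction Quartile.I c T x‖ₑ ^ 2 := by
        simp only [squareFunction, Real.enorm_of_nonneg (Real.sqrt_nonneg _), ENNReal.rpow_two]
    _ ≤ 8 * weakTreeSize Ps i c ^ 2 * ENNReal.ofReal J.len :=
        hT.lintegral_squareFunction_sq_le hTPs c
    _ ≤ 9 * weakTreeSize Ps i c ^ 2 * ENNReal.ofReal J.len := by gcongr; norm_num
    _ = ENNReal.ofReal J.len * (3 * weakTreeSize Ps i c) ^ 2 := by ring
end
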